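/- Let R be a commutative ring and S a multiplicative subset of R. Let f : A → B and g : A → C be u-S-monomorphisms of R-modules and φ : B → C a u-S-isomorphism such that φ ∘ f = g. Then f is u-S-essential if and only if g is u-S-essential. -/

import Mathlib

/-!
Everything is controlled by how u-S-torsion moves along `φ`: preimages of u-S-torsion submodules
under a u-S-monomorphism are u-S-torsion, and under a u-S-epimorphism a submodule is u-S-torsion
once its preimage is. To test essentiality of `φ(K)` on `L`, one tests `K` on `φ⁻¹(L)`. To test
essentiality of `K` on `L`, one tests `φ(K)` on `φ(L)`; here `φ(K) ⊓ φ(L)` may be larger than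
`φ(K ⊓ L)`, but it is the image of `K ⊓ (L ⊔ ker φ)`, and enlarging `L` by a u-S-torsion submodule
does not affect whether `K ⊓ L` is u-S-torsion.
-/

/-- `K` is a uniformly `S`-essential submodule of `M`. -/
def USEssential {R : Type*} [CommRing R] (S : Submonoid R) {M : Type*}
    [AddCommGroup M] [Module R M] (K : Submodule R M) : Prop :=
  ∀ L : Submodule R M,
    (∃ s ∈ S, ∀ x ∈ K ⊓ L, s • x = 0) → ∃ s ∈ S, ∀ x ∈ L, s • x = 0

/-- `f` is a u-S-monomorphism: its kernel is u-S-torsion. -/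
def IsUSMono {R : Type*} [CommRing R] (S : Submonoid R) {M N : Type*}
    [AddCommGroup M] [Module R M] [AddCommGroup N] [Module R N] (f : M →ₗ[R] N) : Prop :=
  ∃ s ∈ S, ∀ x ∈ LinearMap.ker f, s • x = 0

/-- `f` is a u-S-epimorphism: its cokernel is u-S-torsion. -/
def IsUSEpi {R : Type*} [CommRing R] (S : Submonoid R) {M N : Type*}
    [AddCommGroup M] [Module R M] [AddCommGroup N] [Module R N] (f : M →ₗ[R] N) : Prop :=
  ∃ s ∈ S, ∀ y : N, s • y ∈ LinearMap.range f

/-- `f` is a u-S-isomorphism: both a u-S-monomorphism and a u-S-epimorphism. -/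
def IsUSIso {R : Type*} [CommRing R] (S : Submonoid R) {M N : Type*}
    [AddCommGroup M] [Module R M] [AddCommGroup N] [Module R N] (f : M →ₗ[R] N) : Prop :=
  IsUSMono S f ∧ IsUSEpi S f

section

variable {R : Type*} [CommRing R] {S : Submonoid R}
  {M N : Type*} [AddCommGroup M] [Module R M] [AddCommGroup N] [Module R N]
  {φ : M →ₗ[R] N}

variable (S) in
/-- A submodule `K` is u-S-torsion if a single element of `S` annihilates it. Unfolding this
predicate gives the conditions in `USEssential` and `IsUSMono` verbatim. -/
def IsUSTorsion (K : Submodule R M) : Prop :=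
  ∃ s ∈ S, ∀ x ∈ K, s • x = 0

namespace IsUSTorsion

theorem mono {K L : Submodule R M} (hL : IsUSTorsion S L) (hKL : K ≤ L) : IsUSTorsion S K :=
  let ⟨s, hsS, hs⟩ := hL
  ⟨s, hsS, fun x hx => hs x (hKL hx)⟩

theorem map {K : Submodule R M} (hK : IsUSTorsion S K) (φ : M →ₗ[R] N) :
    IsUSTorsion S (K.map φ) := by
  obtain ⟨s, hsS, hs⟩ := hK
  refine ⟨s, hsS, ?_⟩
  rintro _ ⟨x, hx, rfl⟩
  rw [← map_smul, hs x hx, map_zero]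

theorem inf_sup {K L T : Submodule R M} (hKL : IsUSTorsion S (K ⊓ L)) (hT : IsUSTorsion S T) :
    IsUSTorsion S (K ⊓ (L ⊔ T)) := by
  obtain ⟨s, hsS, hs⟩ := hKL
  obtain ⟨t, htS, ht⟩ := hT
  refine ⟨s * t, S.mul_mem hsS htS, ?_⟩
  rintro x ⟨hxK, hxLT⟩
  obtain ⟨l, hl, k, hk, rfl⟩ := Submodule.mem_sup.mp hxLT
  have smul_mem_left : t • (l + k) ∈ L := by
    rw [smul_add, ht k hk, add_zero]
    exact L.smul_mem t hl
  rw [mul_smul]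
  exact hs _ ⟨K.smul_mem t hxK, smul_mem_left⟩

end IsUSTorsion

theorem IsUSMono.isUSTorsion_comap (hφ : IsUSMono S φ) {L : Submodule R N}
    (hL : IsUSTorsion S L) : IsUSTorsion S (L.comap φ) := by
  obtain ⟨t, htS, ht⟩ := hφ
  obtain ⟨s, hsS, hs⟩ := hL
  refine ⟨t * s, S.mul_mem htS hsS, fun x hx => ?_⟩
  have smul_mem_ker : s • x ∈ LinearMap.ker φ := by
    rw [LinearMap.mem_ker, map_smul, hs _ hx]
  rw [mul_smul, ht _ smul_mem_ker]

theorem IsUSEpi.isUSTorsion_of_comap (hφ : IsUSEpi S φ) {L : Submodule R N}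
    (hL : IsUSTorsion S (L.comap φ)) : IsUSTorsion S L := by
  obtain ⟨u, huS, hu⟩ := hφ
  obtain ⟨r, hrS, hr⟩ := hL
  refine ⟨r * u, S.mul_mem hrS huS, fun y hy => ?_⟩
  obtain ⟨x, hx⟩ := hu y
  have mem_comap : x ∈ L.comap φ := by
    rw [Submodule.mem_comap, hx]
    exact L.smul_mem u hy
  rw [mul_smul, ← hx, ← map_smul, hr x mem_comap, map_zero]

theorem USEssential.map {K : Submodule R M} (hK : USEssential S K) (hφ : IsUSIso S φ) :
    USEssential S (K.map φ) := by
  intro L hL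
  have inf_comap_le : K ⊓ L.comap φ ≤ (K.map φ ⊓ L).comap φ := by
    rw [Submodule.map_inf_eq_map_inf_comap]
    exact Submodule.le_comap_map φ _
  have torsion_comap : IsUSTorsion S (L.comap φ) :=
    hK _ ((hφ.1.isUSTorsion_comap hL).mono inf_comap_le)
  exact hφ.2.isUSTorsion_of_comap torsion_comap

theorem USEssential.of_map {K : Submodule R M} (hK : USEssential S (K.map φ))
    (hφ : IsUSMono S φ) : USEssential S K := by
  intro L hL
  have map_inf_map_eq : K.map φ ⊓ L.map φ = (K ⊓ (L ⊔ LinearMap.ker φ)).map φ := by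
    rw [← Submodule.comap_map_eq, Submodule.map_inf_eq_map_inf_comap]
  have torsion_inf : IsUSTorsion S (K.map φ ⊓ L.map φ) := by
    rw [map_inf_map_eq]
    exact (IsUSTorsion.inf_sup hL hφ).map φ
  have torsion_map : IsUSTorsion S (L.map φ) := hK _ torsion_inf
  exact (hφ.isUSTorsion_comap torsion_map).mono (Submodule.le_comap_map φ L)

theorem uSEssential_iff_of_uSIso_comp_general (K : Submodule R M) (hφ : IsUSIso S φ) :
    USEssential S K ↔ USEssential S (K.map φ) :=
  ⟨fun hK => hK.map hφ, fun hK => hK.of_map hφ.1⟩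

end

/-- Lemma (lem4): if `f : A → B` and `g : A → C` are u-S-monomorphisms, `φ : B → C` is a
u-S-isomorphism, and `φ ∘ f = g`, then `f` is u-S-essential iff `g` is u-S-essential. -/
theorem uSEssential_iff_of_uSIso_comp {R : Type*} [CommRing R] [Nontrivial R]
    (S : Submonoid R) (hS0 : (0 : R) ∉ S) {A B C : Type*}
    [AddCommGroup A] [Module R A] [AddCommGroup B] [Module R B] [AddCommGroup C] [Module R C]
    (f : A →ₗ[R] B) (g : A →ₗ[R] C) (φ : B →ₗ[R] C)
    (hf : IsUSMono S f) (hg : IsUSMono S g) (hφ : IsUSIso S φ) (hcomp : φ ∘ₗ f = g) :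
    USEssential S (LinearMap.range f) ↔ USEssential S (LinearMap.range g) := by
  rw [← hcomp, LinearMap.range_comp]
  exact uSEssential_iff_of_uSIso_comp_general _ hφ
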